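/- Let $W_x, W_y > 0$ and let $p, q$ be two independent random points, each uniformly distributed on the rectangle $[0,W_x] \times [0,W_y] \subseteq \mathbb{R}^2$. Then for every $r \ge 0$ with $2r \le \min(W_x, W_y)$, the collision probability satisfies $\mathbb{P}(\|p - q\| \le r) \ge \pi r^2 (W_x - 2r)(W_y - 2r) / (W_x W_y)^2$. -/

import Mathlib

open MeasureTheory Real
open scoped ProbabilityTheory

lemma rect_volume (a b c d : ℝ) :
    volume {x : EuclideanSpace ℝ (Fin 2) | x 0 ∈ Set.Icc a b ∧ x 1 ∈ Set.Icc c d}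
      = ENNReal.ofReal (b - a) * ENNReal.ofReal (d - c) := by
  have h : {x : EuclideanSpace ℝ (Fin 2) | x 0 ∈ Set.Icc a b ∧ x 1 ∈ Set.Icc c d}
      = (WithLp.ofLp) ⁻¹' (Set.Icc (![a, c] : Fin 2 → ℝ) ![b, d]) := by
    ext x
    simp [Pi.le_def, Fin.forall_fin_two]
    tauto
  rw [h, (PiLp.volume_preserving_ofLp (Fin 2)).measure_preimage
    measurableSet_Icc.nullMeasurableSet, Real.volume_Icc_pi]
  simp [Fin.prod_univ_two]

lemma rect_measurable (a b c d : ℝ) :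
    MeasurableSet {x : EuclideanSpace ℝ (Fin 2) | x 0 ∈ Set.Icc a b ∧ x 1 ∈ Set.Icc c d} := by
  have h0 : Measurable (fun x : EuclideanSpace ℝ (Fin 2) => x 0) := by fun_prop
  have h1 : Measurable (fun x : EuclideanSpace ℝ (Fin 2) => x 1) := by fun_prop
  exact (h0 measurableSet_Icc).inter (h1 measurableSet_Icc)

/-- For two independent points `p, q`, each uniformly distributed on the
rectangle `[0,Wx] × [0,Wy] ⊆ ℝ²` (with Euclidean norm), for every `r ≥ 0` with
`2r ≤ min(Wx, Wy)`, the collision probability satisfies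
`ℙ(‖p - q‖ ≤ r) ≥ π r² (Wx - 2r)(Wy - 2r) / (Wx Wy)²`. -/
theorem collision_probability_lower_bound
    (Wx Wy : ℝ) (hWx : 0 < Wx) (hWy : 0 < Wy)
    {Ω : Type*} [MeasureSpace Ω] [IsProbabilityMeasure (ℙ : Measure Ω)]
    (p q : Ω → EuclideanSpace ℝ (Fin 2))
    (hp : Measurable p) (hq : Measurable q)
    (hindep : ProbabilityTheory.IndepFun p q ℙ)
    (R : Set (EuclideanSpace ℝ (Fin 2)))
    (hR : R = {x : EuclideanSpace ℝ (Fin 2) | x 0 ∈ Set.Icc 0 Wx ∧ x 1 ∈ Set.Icc 0 Wy})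
    (hlawp : Measure.map p ℙ = (volume R)⁻¹ • volume.restrict R)
    (hlawq : Measure.map q ℙ = (volume R)⁻¹ • volume.restrict R)
    (r : ℝ) (hr : 0 ≤ r) (hr2 : 2 * r ≤ min Wx Wy) :
    ENNReal.ofReal (π * r ^ 2 * (Wx - 2 * r) * (Wy - 2 * r) / (Wx * Wy) ^ 2)
      ≤ ℙ {ω | ‖p ω - q ω‖ ≤ r} := by
  have hrx : 2 * r ≤ Wx := hr2.trans (min_le_left _ _)
  have hry : 2 * r ≤ Wy := hr2.trans (min_le_right _ _)
  have hA : 0 < Wx * Wy := mul_pos hWx hWy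
  have hRm : MeasurableSet R := hR ▸ rect_measurable 0 Wx 0 Wy
  have hRv : volume R = ENNReal.ofReal (Wx * Wy) := by
    rw [hR, rect_volume, sub_zero, sub_zero, ENNReal.ofReal_mul hWx.le]
  have hRi : (volume R)⁻¹ = ENNReal.ofReal ((Wx * Wy)⁻¹) := by
    rw [hRv, ENNReal.ofReal_inv_of_pos hA]
  set μ : Measure (EuclideanSpace ℝ (Fin 2)) := (volume R)⁻¹ • volume.restrict R with hμ
  have : IsProbabilityMeasure μ := hlawp ▸ Measure.isProbabilityMeasure_map hp.aemeasurable
  let I := {x : EuclideanSpace ℝ (Fin 2) | x 0 ∈ Set.Icc r (Wx - r) ∧ x 1 ∈ Set.Icc r (Wy - r)}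
  have hIm : MeasurableSet I := rect_measurable _ _ _ _
  have hIv : volume I = ENNReal.ofReal ((Wx - 2 * r) * (Wy - 2 * r)) := by
    rw [rect_volume, ← ENNReal.ofReal_mul (by linarith)]
    congr 1
    ring
  have hsub : ∀ x ∈ I, Metric.closedBall x r ⊆ R := by
    intro x hx y hy
    have hy' : ‖y - x‖ ≤ r := by simpa [dist_eq_norm] using hy
    have h0 := abs_le.1 ((PiLp.norm_apply_le (y - x) 0).trans hy')
    have h1 := abs_le.1 ((PiLp.norm_apply_le (y - x) 1).trans hy')
    obtain ⟨⟨a, b⟩, ⟨c, d⟩⟩ := hx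
    simp only [PiLp.sub_apply] at h0 h1
    rw [hR]
    refine ⟨⟨?_, ?_⟩, ⟨?_, ?_⟩⟩ <;> linarith [h0.1, h0.2, h1.1, h1.2]
  have hIR : I ⊆ R := fun x hx => hsub x hx (Metric.mem_closedBall_self hr)
  have hμI : μ I = ENNReal.ofReal ((Wx * Wy)⁻¹ * ((Wx - 2 * r) * (Wy - 2 * r))) := by
    rw [hμ, Measure.smul_apply, Measure.restrict_apply hIm, Set.inter_eq_left.2 hIR, hIv, hRi,
      smul_eq_mul, ← ENNReal.ofReal_mul (by positivity)]
  have hμB : ∀ x ∈ I, μ (Metric.closedBall x r) = ENNReal.ofReal ((Wx * Wy)⁻¹ * (r ^ 2 * π)) := by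
    intro x hx
    rw [hμ, Measure.smul_apply, Measure.restrict_apply Metric.isClosed_closedBall.measurableSet,
      Set.inter_eq_left.2 (hsub x hx), hRi, EuclideanSpace.volume_closedBall_fin_two, smul_eq_mul,
      ENNReal.ofReal_mul (by positivity), ENNReal.ofReal_mul (by positivity),
      ENNReal.ofReal_pow hr]
    try rfl
  let S : Set (EuclideanSpace ℝ (Fin 2) × EuclideanSpace ℝ (Fin 2)) := {z | ‖z.1 - z.2‖ ≤ r}
  have hS : MeasurableSet S := measurableSet_le (by fun_prop) (by fun_prop)
  have hmap : Measure.map (fun ω => (p ω, q ω)) ℙ = μ.prod μ := by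
    rw [(ProbabilityTheory.indepFun_iff_map_prod_eq_prod_map_map hp.aemeasurable
      hq.aemeasurable).1 hindep, hlawp, hlawq]
  have hP : ℙ {ω | ‖p ω - q ω‖ ≤ r} = ∫⁻ x, μ (Metric.closedBall x r) ∂μ := by
    have : ℙ {ω | ‖p ω - q ω‖ ≤ r} = (Measure.map (fun ω => (p ω, q ω)) ℙ) S := by
      rw [Measure.map_apply (hp.prodMk hq) hS]
      rfl
    rw [this, hmap, Measure.prod_apply hS]
    congr 1
    ext x
    congr 1
    ext y
    simp [S, dist_eq_norm, norm_sub_rev]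
  rw [hP]
  calc _ = ENNReal.ofReal ((Wx * Wy)⁻¹ * (r ^ 2 * π)) * μ I := by
        rw [hμI, ← ENNReal.ofReal_mul (by positivity)]
        congr 1
        field_simp
    _ = ∫⁻ x in I, μ (Metric.closedBall x r) ∂μ := by
        rw [setLIntegral_congr_fun hIm hμB, setLIntegral_const]
    _ ≤ _ := setLIntegral_le_lintegral _ _
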